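/- Correctness of the classical translation of finitely-valued models: Fix a finite relational vocabulary τ without equality and a finite algebra A ⊆ [0,1] closed under the truth functions. For every A-valued model 𝔐 over τ with nonempty domain, every formula φ with a tuple ā of parameters, and every a ∈ A: ‖φ[ā]‖_𝔐 = a if and only if 𝔐* ⊨ T^a(φ)[ā], where 𝔐* is the classical τ*-structure with the same domain interpreting each P_i^{na} as {ā : P^n_{i,𝔐}(ā) = a}. Moreover 𝔐* is a model of Σ, and every classical model of Σ equals 𝔐* for a unique A-valued model 𝔐. -/

import Mathlib

/-! Statement 10: Correctness of the classical translation of finitely-valued models. -/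

open Classical

noncomputable section

instance : Fact ((0:ℝ) ≤ 1) := ⟨zero_le_one⟩

/-- The real unit interval, as the set of truth values. -/
abbrev UI : Type := unitInterval

/-- A relational vocabulary: a type of predicate symbols with arities. -/
structure Vocab : Type 1 where
  Pred : Type
  arity : Pred → ℕ

/-- A family of (propositional) connectives with arities. -/
structure Conns : Type 1 where
  Conn : Type
  carity : Conn → ℕ

/-- A real-valued logic: a truth function for each connective. -/
def TruthFns (C : Conns) : Type := ∀ c : C.Conn, (Fin (C.carity c) → UI) → UI

/-- First-order formulas over the vocabulary `V` and connectives `C`,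
with variables named by natural numbers. -/
inductive Formula (V : Vocab) (C : Conns) : Type
  | pred (P : V.Pred) (v : Fin (V.arity P) → ℕ) : Formula V C
  | conn (c : C.Conn) (args : Fin (C.carity c) → Formula V C) : Formula V C
  | all (y : ℕ) (φ : Formula V C) : Formula V C
  | ex (y : ℕ) (φ : Formula V C) : Formula V C

/-- A real-valued first-order model with domain `M`. -/
structure Model (V : Vocab) (M : Type) where
  interp : ∀ P : V.Pred, (Fin (V.arity P) → M) → UI

variable {V : Vocab} {C : Conns} {M : Type}

/-- The truth value of a formula at a valuation `ν : ℕ → M`: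
connectives are computed by their truth functions, `∀` by infimum over the
domain and `∃` by supremum over the domain. -/
def eval (truth : TruthFns C) (𝔐 : Model V M) : Formula V C → (ℕ → M) → UI
  | .pred P v => fun ν => 𝔐.interp P fun i => ν (v i)
  | .conn c args => fun ν => truth c fun i => eval truth 𝔐 (args i) ν
  | .all y φ => fun ν => ⨅ e : M, eval truth 𝔐 φ (Function.update ν y e)
  | .ex y φ => fun ν => ⨆ e : M, eval truth 𝔐 φ (Function.update ν y e)

/-- A multi-dimensional sentence over the domain `M`: a finite sequence of
component formulas together with an information set `S` of tuples of
interpretations. -/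
structure MDSentence (V : Vocab) (C : Conns) (M : Type) where
  k : ℕ
  comps : Fin k → Formula V C
  S : Set (Fin k → (ℕ → M) → UI)

/-- Satisfaction: the tuple of interpretations of the components lies in `S`. -/
def Sat (truth : TruthFns C) (𝔐 : Model V M) (σ : MDSentence V C M) : Prop :=
  (fun i => eval truth 𝔐 (σ.comps i)) ∈ σ.S

/-- A tuple is *good* for the components `comps` if it respects the semantics
of the connectives and quantifiers wherever the immediate subformulas of a
component also occur among the components. -/
def GoodTuple (truth : TruthFns C) {k : ℕ} (comps : Fin k → Formula V C)
    (f : Fin k → (ℕ → M) → UI) : Prop :=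
  (∀ (m : Fin k) (c : C.Conn) (args : Fin (C.carity c) → Formula V C)
      (g : Fin (C.carity c) → Fin k),
      comps m = .conn c args → (∀ j, comps (g j) = args j) →
      f m = fun ν => truth c fun j => f (g j) ν) ∧
  (∀ (i j : Fin k) (y : ℕ) (φ : Formula V C), comps i = .all y φ → comps j = φ →
      f i = fun ν => ⨅ e : M, f j (Function.update ν y e)) ∧
  (∀ (i j : Fin k) (y : ℕ) (φ : Formula V C), comps i = .ex y φ → comps j = φ →
      f i = fun ν => ⨆ e : M, f j (Function.update ν y e))

/-- Classical first-order formulas over the starred vocabulary `τ*`, which has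
a predicate `P^a` for each predicate `P` of `τ` and each truth value `a ∈ A`,
with finite conjunctions and disjunctions (given by lists), negation and
quantifiers. -/
inductive CFormula (V : Vocab) (A : Finset UI) : Type
  | pred (P : V.Pred) (a : ↥A) (v : Fin (V.arity P) → ℕ) : CFormula V A
  | ands (l : List (CFormula V A)) : CFormula V A
  | ors (l : List (CFormula V A)) : CFormula V A
  | not (φ : CFormula V A) : CFormula V A
  | call (y : ℕ) (φ : CFormula V A) : CFormula V A
  | cex (y : ℕ) (φ : CFormula V A) : CFormula V A

/-- A classical structure for the starred vocabulary `τ*`. -/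
structure CModel (V : Vocab) (A : Finset UI) (M : Type) where
  interp : ∀ P : V.Pred, ↥A → (Fin (V.arity P) → M) → Prop

/-- Classical (two-valued) satisfaction of starred formulas. -/
def csat {V : Vocab} {A : Finset UI} {M : Type} (𝔑 : CModel V A M) :
    CFormula V A → (ℕ → M) → Prop
  | .pred P a v => fun ν => 𝔑.interp P a fun i => ν (v i)
  | .ands l => fun ν => ∀ ψ ∈ l.attach, csat 𝔑 ψ.1 ν
  | .ors l => fun ν => ∃ ψ ∈ l.attach, csat 𝔑 ψ.1 ν
  | .not φ => fun ν => ¬ csat 𝔑 φ ν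
  | .call y φ => fun ν => ∀ e : M, csat 𝔑 φ (Function.update ν y e)
  | .cex y φ => fun ν => ∃ e : M, csat 𝔑 φ (Function.update ν y e)
decreasing_by
  all_goals simp_wf
  all_goals first
    | (have h := List.sizeOf_lt_of_mem ψ.2; omega)
    | omega

/-- The translation `T^a` of a many-valued formula into a classical starred
formula: `T^a(P x̄) = P^a x̄`; `T^a(∘(ψ₁,…,ψ_n))` is the disjunction over all
tuples `b ∈ A^n` with `∘(b₁,…,b_n) = a` of the conjunctions `⋀ᵢ T^{bᵢ}(ψᵢ)`;
for the quantifiers, a disjunction over all tuples `b₁,…,b_k ∈ A`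
(`1 ≤ k ≤ |A|`) whose max (resp. min) is `a` of `⋀ᵢ ∃x T^{bᵢ}(ψ)`, in
conjunction with `∀x ⋁_{b ≤ a} T^b(ψ)` (resp. `∀x ⋁_{b ≥ a} T^b(ψ)`); the
last conjunct is the paper's `∀y ⋁_b T^b(ψ(y/x))` up to α-equivalence. -/
def transl {V : Vocab} {C : Conns} (truth : TruthFns C) (A : Finset UI) :
    Formula V C → ↥A → CFormula V A
  | .pred P v => fun a => .pred P a v
  | .conn c args => fun a =>
      .ors (((Finset.univ.filter
          (fun b : Fin (C.carity c) → ↥A =>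
            truth c (fun i => (b i : UI)) = (a : UI))).toList.map
        (fun b => CFormula.ands
          (List.ofFn fun i => transl truth A (args i) (b i)))))
  | .ex y φ => fun a =>
      .ands [
        .ors ((List.range A.card).flatMap (fun m =>
          ((Finset.univ.filter
              (fun b : Fin (m+1) → ↥A => (⨆ i, (b i : UI)) = (a : UI))).toList.map
            (fun b => CFormula.ands
              (List.ofFn fun i : Fin (m+1) =>
                CFormula.cex y (transl truth A φ (b i))))))),
        .call y (.ors ((Finset.univ.filter
            (fun b : ↥A => (b : UI) ≤ (a : UI))).toList.map
          (fun b => transl truth A φ b)))]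
  | .all y φ => fun a =>
      .ands [
        .ors ((List.range A.card).flatMap (fun m =>
          ((Finset.univ.filter
              (fun b : Fin (m+1) → ↥A => (⨅ i, (b i : UI)) = (a : UI))).toList.map
            (fun b => CFormula.ands
              (List.ofFn fun i : Fin (m+1) =>
                CFormula.cex y (transl truth A φ (b i))))))),
        .call y (.ors ((Finset.univ.filter
            (fun b : ↥A => (a : UI) ≤ (b : UI))).toList.map
          (fun b => transl truth A φ b)))]

/-- Universal closure over the variables `0, …, n-1`. -/
def foralls {V : Vocab} {A : Finset UI} : ℕ → CFormula V A → CFormula V A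
  | 0, φ => φ
  | n + 1, φ => .call n (foralls n φ)

/-- The axiom of `Σ` saying that each tuple satisfies `P^a` for some
`a ∈ A`. -/
def totalAx {V : Vocab} (A : Finset UI) (P : V.Pred) : CFormula V A :=
  foralls (V.arity P)
    (.ors ((Finset.univ : Finset ↥A).toList.map
      (fun a => CFormula.pred P a (fun i => (i : ℕ)))))

/-- The axiom of `Σ` saying that no tuple satisfies both `P^a` and `P^b` for
`a ≠ b`. -/
def exclAx {V : Vocab} (A : Finset UI) (P : V.Pred) (a b : ↥A) : CFormula V A :=
  foralls (V.arity P)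
    (.not (.ands [CFormula.pred P a (fun i => (i : ℕ)),
                  CFormula.pred P b (fun i => (i : ℕ))]))

/-- The classical theory `Σ`. -/
def SigmaTheory (V : Vocab) (A : Finset UI) : Set (CFormula V A) :=
  {ψ | (∃ P : V.Pred, ψ = totalAx A P) ∨
       (∃ (P : V.Pred) (a b : ↥A), a ≠ b ∧ ψ = exclAx A P a b)}

/-- A classical structure is a model of `Σ` when it satisfies every member of
`Σ` at every valuation. -/
def SatSigma {V : Vocab} {M : Type} (A : Finset UI) (𝔑 : CModel V A M) : Prop :=
  ∀ ψ ∈ SigmaTheory V A, ∀ ν : ℕ → M, csat 𝔑 ψ ν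

/-- The classical structure `𝔐*` associated with a many-valued model `𝔐`:
`P^a` holds of a tuple iff `P` takes value `a` there. -/
def star {V : Vocab} {M : Type} (A : Finset UI) (𝔐 : Model V M) :
    CModel V A M :=
  ⟨fun P a t => 𝔐.interp P t = (a : UI)⟩

/-! The infimum of finitely many values is attained, so `‖∀x ψ‖ = a` says exactly that `a` is a
value of `ψ` (the one-element tuple `b₁ = a` witnesses the disjunction in `T^a(∀x ψ)`) and a lower
bound of all its values; `∃x ψ` is dual. Correctness of `T^a` is then an induction on formulas that
runs simultaneously for all `a ∈ A`. The axioms of `Σ` say that every tuple satisfies exactly one of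
the predicates `P^a`, so a model of `Σ` is the same thing as an `A`-valued interpretation. -/

/-- `A` is a subalgebra of the algebra of truth values, i.e. closed under the truth functions of
all connectives. -/
def IsClosedUnder (truth : TruthFns C) (A : Finset UI) : Prop :=
  ∀ (c : C.Conn) (b : Fin (C.carity c) → UI), (∀ i, b i ∈ A) → truth c b ∈ A

/-- The model is `A`-valued: its atomic truth values all lie in `A`. -/
def Model.IsValuedIn (𝔐 : Model V M) (A : Finset UI) : Prop :=
  ∀ P t, 𝔐.interp P t ∈ A

section FiniteRange

variable {α ι : Type*} [CompleteLinearOrder α] [Nonempty ι] {A : Finset α} {f : ι → α}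

theorem exists_eq_iInf_of_forall_mem (hf : ∀ i, f i ∈ A) : ∃ i, f i = ⨅ i, f i :=
  (Set.range_nonempty f).csInf_mem (A.finite_toSet.subset (Set.range_subset_iff.2 hf))

theorem exists_eq_iSup_of_forall_mem (hf : ∀ i, f i ∈ A) : ∃ i, f i = ⨆ i, f i :=
  exists_eq_iInf_of_forall_mem (α := αᵒᵈ) hf

theorem iInf_eq_iff_exists_tuple (hf : ∀ i, f i ∈ A) (a : A) :
    ⨅ i, f i = a ↔
      (∃ m < A.card, ∃ b : Fin (m + 1) → A, ⨅ j, (b j : α) = a ∧ ∀ j, ∃ i, f i = b j) ∧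
        ∀ i, ∃ b : A, (a : α) ≤ b ∧ f i = b := by
  constructor
  · intro h
    obtain ⟨i, hi⟩ := exists_eq_iInf_of_forall_mem hf
    exact ⟨⟨0, Finset.card_pos.2 ⟨a, a.2⟩, fun _ => a, ciInf_const, fun _ => ⟨i, hi.trans h⟩⟩,
      fun i => ⟨⟨f i, hf i⟩, h ▸ iInf_le f i, rfl⟩⟩
  · rintro ⟨⟨m, -, b, hb, attained⟩, lower⟩
    apply le_antisymm
    · rw [← hb]
      exact iInf_mono' fun j => (attained j).imp fun _ => le_of_eq
    · refine le_iInf fun i => ?_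
      obtain ⟨b, hab, hfb⟩ := lower i
      exact hab.trans_eq hfb.symm

theorem iSup_eq_iff_exists_tuple (hf : ∀ i, f i ∈ A) (a : A) :
    ⨆ i, f i = a ↔
      (∃ m < A.card, ∃ b : Fin (m + 1) → A, ⨆ j, (b j : α) = a ∧ ∀ j, ∃ i, f i = b j) ∧
        ∀ i, ∃ b : A, (b : α) ≤ a ∧ f i = b :=
  iInf_eq_iff_exists_tuple (α := αᵒᵈ) hf a

end FiniteRange

theorem eval_mem {truth : TruthFns C} {A : Finset UI} (hA : IsClosedUnder truth A)
    {𝔐 : Model V M} (h𝔐 : 𝔐.IsValuedIn A) (φ : Formula V C) (ν : ℕ → M) :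
    eval truth 𝔐 φ ν ∈ A := by
  have : Nonempty M := ⟨ν 0⟩
  induction φ generalizing ν with
  | pred P v => exact h𝔐 P _
  | conn c args ih => exact hA c _ fun i => ih i ν
  | all y φ ih =>
    obtain ⟨e, he⟩ := exists_eq_iInf_of_forall_mem fun e => ih (Function.update ν y e)
    simp only [eval]
    exact he ▸ ih (Function.update ν y e)
  | ex y φ ih =>
    obtain ⟨e, he⟩ := exists_eq_iSup_of_forall_mem fun e => ih (Function.update ν y e)
    simp only [eval]
    exact he ▸ ih (Function.update ν y e)

section ClassicalSatisfaction

variable {A : Finset UI} (𝔑 : CModel V A M)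

theorem csat_ands (l : List (CFormula V A)) (ν : ℕ → M) :
    csat 𝔑 (.ands l) ν ↔ ∀ ψ ∈ l, csat 𝔑 ψ ν := by
  simp [csat]

theorem csat_ors (l : List (CFormula V A)) (ν : ℕ → M) :
    csat 𝔑 (.ors l) ν ↔ ∃ ψ ∈ l, csat 𝔑 ψ ν := by
  simp [csat]

theorem csat_ands_pair (φ ψ : CFormula V A) (ν : ℕ → M) :
    csat 𝔑 (.ands [φ, ψ]) ν ↔ csat 𝔑 φ ν ∧ csat 𝔑 ψ ν := by
  simp [csat_ands]

theorem csat_ands_ofFn {n : ℕ} (φ : Fin n → CFormula V A) (ν : ℕ → M) :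
    csat 𝔑 (.ands (List.ofFn φ)) ν ↔ ∀ i, csat 𝔑 (φ i) ν := by
  rw [csat_ands, List.forall_mem_ofFn_iff]

theorem csat_ors_flatMap {β : Type*} (l : List β) (φ : β → List (CFormula V A)) (ν : ℕ → M) :
    csat 𝔑 (.ors (l.flatMap φ)) ν ↔ ∃ b ∈ l, csat 𝔑 (.ors (φ b)) ν := by
  simp only [csat_ors, List.mem_flatMap]
  tauto

theorem csat_ors_filter_map {β : Type*} [Fintype β] (p : β → Prop) [DecidablePred p]
    (φ : β → CFormula V A) (ν : ℕ → M) :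
    csat 𝔑 (.ors ((Finset.univ.filter p).toList.map φ)) ν ↔ ∃ b, p b ∧ csat 𝔑 (φ b) ν := by
  simp [csat_ors]

theorem forall_csat_foralls (n : ℕ) (φ : CFormula V A) :
    (∀ ν, csat 𝔑 (foralls n φ) ν) ↔ ∀ ν, csat 𝔑 φ ν := by
  induction n with
  | zero => rfl
  | succ n ih =>
    simp only [foralls, csat, ← ih]
    exact ⟨fun h ν => by simpa only [Function.update_eq_self] using h ν (ν n), fun h ν e => h _⟩

end ClassicalSatisfaction

section Translation

variable (truth : TruthFns C) {A : Finset UI} (𝔑 : CModel V A M) (a : A) (ν : ℕ → M)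

theorem csat_transl_conn (c : C.Conn) (args : Fin (C.carity c) → Formula V C) :
    csat 𝔑 (transl truth A (.conn c args) a) ν ↔
      ∃ b : Fin (C.carity c) → A, truth c (fun i => b i) = a ∧
        ∀ i, csat 𝔑 (transl truth A (args i) (b i)) ν := by
  simp only [transl, csat_ors_filter_map, csat_ands_ofFn]

theorem csat_transl_all (y : ℕ) (φ : Formula V C) :
    csat 𝔑 (transl truth A (.all y φ) a) ν ↔
      (∃ m < A.card, ∃ b : Fin (m + 1) → A, ⨅ i, (b i : UI) = a ∧
        ∀ i, ∃ e, csat 𝔑 (transl truth A φ (b i)) (Function.update ν y e)) ∧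
      ∀ e, ∃ b : A, (a : UI) ≤ b ∧ csat 𝔑 (transl truth A φ b) (Function.update ν y e) := by
  simp only [transl, csat_ands_pair, csat_ors_flatMap, csat_ors_filter_map, csat_ands_ofFn,
    List.mem_range, csat]

theorem csat_transl_ex (y : ℕ) (φ : Formula V C) :
    csat 𝔑 (transl truth A (.ex y φ) a) ν ↔
      (∃ m < A.card, ∃ b : Fin (m + 1) → A, ⨆ i, (b i : UI) = a ∧
        ∀ i, ∃ e, csat 𝔑 (transl truth A φ (b i)) (Function.update ν y e)) ∧
      ∀ e, ∃ b : A, (b : UI) ≤ a ∧ csat 𝔑 (transl truth A φ b) (Function.update ν y e) := by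
  simp only [transl, csat_ands_pair, csat_ors_flatMap, csat_ors_filter_map, csat_ands_ofFn,
    List.mem_range, csat]

end Translation

theorem eval_eq_iff_csat_transl {truth : TruthFns C} {A : Finset UI} (hA : IsClosedUnder truth A)
    {𝔐 : Model V M} (h𝔐 : 𝔐.IsValuedIn A) (φ : Formula V C) (ν : ℕ → M) (a : A) :
    eval truth 𝔐 φ ν = a ↔ csat (star A 𝔐) (transl truth A φ a) ν := by
  have : Nonempty M := ⟨ν 0⟩
  induction φ generalizing ν a with
  | pred P v => simp only [eval, transl, csat, _root_.star]
  | conn c args ih =>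
    simp only [csat_transl_conn, ← ih, eval]
    constructor
    · exact fun h => ⟨fun i => ⟨_, eval_mem hA h𝔐 (args i) ν⟩, h, fun _ => rfl⟩
    · rintro ⟨b, hb, hargs⟩
      rw [funext hargs, hb]
  | all y φ ih =>
    simp only [csat_transl_all, ← ih]
    exact iInf_eq_iff_exists_tuple (fun e => eval_mem hA h𝔐 φ (Function.update ν y e)) a
  | ex y φ ih =>
    simp only [csat_transl_ex, ← ih]
    exact iSup_eq_iff_exists_tuple (fun e => eval_mem hA h𝔐 φ (Function.update ν y e)) a

section Sigma

theorem forall_valuation_iff {X : Type*} [Nonempty X] {n : ℕ} {p : (Fin n → X) → Prop} :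
    (∀ ν : ℕ → X, p fun i => ν i) ↔ ∀ t, p t :=
  (Fin.val_injective.surjective_comp_right (γ := X)).forall.symm

variable [Nonempty M] {A : Finset UI} (𝔑 : CModel V A M) (P : V.Pred)

theorem forall_csat_totalAx :
    (∀ ν, csat 𝔑 (totalAx A P) ν) ↔ ∀ t, ∃ a, 𝔑.interp P a t := by
  rw [totalAx, forall_csat_foralls, ← forall_valuation_iff]
  simp [csat_ors, csat]

theorem forall_csat_exclAx (a b : A) :
    (∀ ν, csat 𝔑 (exclAx A P a b) ν) ↔ ∀ t, ¬(𝔑.interp P a t ∧ 𝔑.interp P b t) := by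
  rw [exclAx, forall_csat_foralls, ← forall_valuation_iff]
  simp only [csat, csat_ands_pair]

theorem satSigma_iff_existsUnique :
    SatSigma A 𝔑 ↔ ∀ P t, ∃! a, 𝔑.interp P a t := by
  constructor
  · intro h P t
    obtain ⟨a, ha⟩ := (forall_csat_totalAx 𝔑 P).1 (h _ (.inl ⟨P, rfl⟩)) t
    refine ⟨a, ha, fun b hb => ?_⟩
    by_contra hba
    exact (forall_csat_exclAx 𝔑 P b a).1 (h _ (.inr ⟨P, b, a, hba, rfl⟩)) t ⟨hb, ha⟩
  · rintro h _ (⟨P, rfl⟩ | ⟨P, a, b, hab, rfl⟩)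
    · exact (forall_csat_totalAx 𝔑 P).2 fun t => (h P t).exists
    · exact (forall_csat_exclAx 𝔑 P a b).2 fun t ⟨ha, hb⟩ => hab ((h P t).unique ha hb)

end Sigma

theorem Model.IsValuedIn.existsUnique_star_interp {A : Finset UI} {𝔐 : Model V M}
    (h𝔐 : 𝔐.IsValuedIn A) (P : V.Pred) (t : Fin (V.arity P) → M) :
    ∃! a, (star A 𝔐).interp P a t :=
  ⟨⟨_, h𝔐 P t⟩, rfl, fun _ hb => Subtype.ext hb.symm⟩

theorem existsUnique_isValuedIn_star_eq {A : Finset UI} {𝔑 : CModel V A M}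
    (h𝔑 : ∀ P t, ∃! a, 𝔑.interp P a t) :
    ∃! 𝔐 : Model V M, 𝔐.IsValuedIn A ∧ star A 𝔐 = 𝔑 := by
  choose value interp_value eq_value using h𝔑
  refine ⟨⟨fun P t => value P t⟩, ⟨fun P t => (value P t).2, ?_⟩, ?_⟩
  · refine congrArg CModel.mk (funext₃ fun P a t => propext ?_)
    rw [Subtype.coe_inj]
    exact ⟨fun h => h ▸ interp_value P t, fun h => (eq_value P t a h).symm⟩
  · rintro 𝔐 ⟨-, rfl⟩
    exact congrArg Model.mk (funext₂ interp_value)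

theorem translation_correctness_general {truth : TruthFns C} {A : Finset UI}
    (hA : IsClosedUnder truth A) [Nonempty M] :
    (∀ 𝔐 : Model V M, 𝔐.IsValuedIn A →
      (∀ (φ : Formula V C) (ν : ℕ → M) (a : A),
        eval truth 𝔐 φ ν = a ↔ csat (star A 𝔐) (transl truth A φ a) ν) ∧
      SatSigma A (star A 𝔐)) ∧
    ∀ 𝔑 : CModel V A M, SatSigma A 𝔑 → ∃! 𝔐 : Model V M, 𝔐.IsValuedIn A ∧ star A 𝔐 = 𝔑 :=
  ⟨fun 𝔐 h𝔐 => ⟨eval_eq_iff_csat_transl hA h𝔐,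
      (satSigma_iff_existsUnique (star A 𝔐)).2 h𝔐.existsUnique_star_interp⟩,
    fun 𝔑 h𝔑 => existsUnique_isValuedIn_star_eq ((satSigma_iff_existsUnique 𝔑).1 h𝔑)⟩

/-- **Correctness of the classical translation** (after Badia–Noguera): for a
finite relational vocabulary without equality and a finite algebra
`A ⊆ [0,1]` (with `0, 1 ∈ A`) closed under the truth functions: for every
`A`-valued model `𝔐`, formula `φ`, valuation and `a ∈ A`, `‖φ‖ = a` iff
`𝔐* ⊨ T^a(φ)`; moreover `𝔐*` is a model of `Σ`, and every classical model
of `Σ` equals `𝔐*` for a unique `A`-valued `𝔐`. -/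
theorem translation_correctness
    (V : Vocab) (hVfin : Finite V.Pred) (C : Conns) (truth : TruthFns C)
    (A : Finset UI) (h0 : (0 : UI) ∈ A) (h1 : (1 : UI) ∈ A)
    (hA : ∀ (c : C.Conn) (b : Fin (C.carity c) → UI),
        (∀ i, b i ∈ A) → truth c b ∈ A)
    (M : Type) (hM : Nonempty M) :
    (∀ 𝔐 : Model V M, (∀ P t, 𝔐.interp P t ∈ A) →
      ((∀ (φ : Formula V C) (ν : ℕ → M) (a : ↥A),
          eval truth 𝔐 φ ν = (a : UI) ↔
            csat (star A 𝔐) (transl truth A φ a) ν) ∧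
        SatSigma A (star A 𝔐))) ∧
    (∀ 𝔑 : CModel V A M, SatSigma A 𝔑 →
      ∃! 𝔐 : Model V M, (∀ P t, 𝔐.interp P t ∈ A) ∧ star A 𝔐 = 𝔑) :=
  translation_correctness_general hA

end
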